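/- arXiv:2604.18497 — 2 statements merged into one kernel-verified Lean document; each statement's English description precedes it below -/
import Mathlib

section
/- Let d : ℕ → ℕ with d(m) ≥ 1 for all m, and for each m let B(m) and C(m) be d(m)×d(m) real matrices; write b(m) = β₁(B(m)) and c(m) = β₁(C(m)). Assume: (i) β₁((B(m) − b(m)·I)²·(C(m) − c(m)·I)) → 0 as m → ∞; (ii) β₁(B(m)·C(m)) − b(m)·c(m) → 0 as m → ∞; (iii) the sequence (b(m)) is bounded. Then β₁(B(m)²·C(m)) − β₂(B(m))·β₁(C(m)) → 0 as m → ∞. -/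
open Matrix Filter

/-- `β₁(A) = (1/m)·tr(A)` for an `m × m` real matrix. -/
noncomputable def beta1 {m : ℕ} (A : Matrix (Fin m) (Fin m) ℝ) : ℝ :=
  A.trace / m

/-- `β₂(A) = (1/m)·tr(A²)` for an `m × m` real matrix. -/
noncomputable def beta2 {m : ℕ} (A : Matrix (Fin m) (Fin m) ℝ) : ℝ :=
  (A ^ 2).trace / m

/-- under the asymptotic freeness condition
`β₁((B − bI)²(C − cI)) → 0`, together with `β₁(BC) − bc → 0` and boundedness of
`(b(m))`, it follows that `β₁(B²C) − β₂(B)·β₁(C) → 0`. -/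
theorem beta1_sq_mul_sub_of_centered_tendsto_zero
    (d : ℕ → ℕ) (hd : ∀ m, 1 ≤ d m)
    (B C : ∀ m, Matrix (Fin (d m)) (Fin (d m)) ℝ)
    (b c : ℕ → ℝ)
    (hb : ∀ m, b m = beta1 (B m)) (hc : ∀ m, c m = beta1 (C m))
    (hfree : Tendsto (fun m =>
        beta1 ((B m - b m • (1 : Matrix (Fin (d m)) (Fin (d m)) ℝ)) ^ 2 *
               (C m - c m • (1 : Matrix (Fin (d m)) (Fin (d m)) ℝ))))
      atTop (nhds 0))
    (hmul : Tendsto (fun m => beta1 (B m * C m) - b m * c m) atTop (nhds 0))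
    (hbdd : ∃ M : ℝ, ∀ m, |b m| ≤ M) :
    Tendsto (fun m => beta1 (B m ^ 2 * C m) - beta2 (B m) * beta1 (C m))
      atTop (nhds 0) := by
  obtain ⟨M, hM⟩ := hbdd
  have key : ∀ m, beta1 (B m ^ 2 * C m) - beta2 (B m) * beta1 (C m) =
      beta1 ((B m - b m • (1 : Matrix (Fin (d m)) (Fin (d m)) ℝ)) ^ 2 *
               (C m - c m • (1 : Matrix (Fin (d m)) (Fin (d m)) ℝ))) +
      2 * (b m * (beta1 (B m * C m) - b m * c m)) := by
    intro m
    have hne : (d m : ℝ) ≠ 0 := by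
      have := hd m
      positivity
    have e : (B m - b m • (1 : Matrix (Fin (d m)) (Fin (d m)) ℝ)) ^ 2 *
               (C m - c m • (1 : Matrix (Fin (d m)) (Fin (d m)) ℝ)) =
        B m ^ 2 * C m - (2 * b m) • (B m * C m) + (b m ^ 2) • C m - c m • B m ^ 2
          + (2 * b m * c m) • B m - (b m ^ 2 * c m) • 1 := by
      simp only [pow_two, sub_mul, mul_sub, smul_mul_assoc, mul_smul_comm, one_mul, mul_one]
      module
    have tB : (B m).trace = d m * b m := by
      rw [hb, beta1]; field_simp
    have tC : (C m).trace = d m * c m := by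
      rw [hc, beta1]; field_simp
    rw [e, ← hc]
    simp only [beta1, beta2, trace_add, trace_sub, trace_smul, trace_one, Fintype.card_fin,
      smul_eq_mul, tB, tC]
    field_simp
    ring
  have h2 : Tendsto (fun m => b m * (beta1 (B m * C m) - b m * c m)) atTop (nhds 0) := by
    refine squeeze_zero_norm (a := fun m => M * |beta1 (B m * C m) - b m * c m|) ?_ ?_
    · intro m
      rw [Real.norm_eq_abs, abs_mul]
      exact mul_le_mul_of_nonneg_right (hM m) (abs_nonneg _)
    · simpa using hmul.abs.const_mul M
  simp only [key]
  simpa using hfree.add (h2.const_mul 2)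
end

section
/- Let d : ℕ → ℕ with d(m) ≥ 1 for all m, and for each m let B(m) and C(m) be d(m)×d(m) real matrices; write b(m) = β₁(B(m)) and c(m) = β₁(C(m)). Assume: (i) β₁((B(m) − b(m)·I)(C(m) − c(m)·I)(B(m) − b(m)·I)(C(m) − c(m)·I)) → 0; (ii) β₁(B(m)²·C(m)) − β₂(B(m))·c(m) → 0; (iii) β₁(B(m)·C(m)²) − b(m)·β₂(C(m)) → 0; (iv) β₁(B(m)·C(m)) − b(m)·c(m) → 0; (v) the sequences (b(m)), (c(m)), (β₂(B(m))), (β₂(C(m))) are all bounded. Then β₁(B(m)·C(m)·B(m)·C(m)) − (β₂(B(m))·c(m)² + b(m)²·β₂(C(m)) − b(m)²·c(m)²) → 0 as m → ∞. -/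
open Matrix Filter

theorem beta1_expand_aux {n : ℕ} (hn : 1 ≤ n) (B C : Matrix (Fin n) (Fin n) ℝ) (b c : ℝ)
    (hb : b = beta1 B) (hc : c = beta1 C) :
    beta1 ((B - b • (1 : Matrix (Fin n) (Fin n) ℝ)) * (C - c • (1 : Matrix (Fin n) (Fin n) ℝ)) *
      (B - b • (1 : Matrix (Fin n) (Fin n) ℝ)) * (C - c • (1 : Matrix (Fin n) (Fin n) ℝ))) =
    beta1 (B * C * B * C) - 2 * c * beta1 (B ^ 2 * C) - 2 * b * beta1 (B * C ^ 2)
      + b ^ 2 * beta2 C + c ^ 2 * beta2 B + 4 * b * c * beta1 (B * C) - 3 * b ^ 2 * c ^ 2 := by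
  have hn0 : (n : ℝ) ≠ 0 := by
    have : n ≠ 0 := by omega
    exact_mod_cast this
  have h1 : (C * B).trace = (B * C).trace := Matrix.trace_mul_comm _ _
  have h2 : (B * C * B).trace = (B * B * C).trace := by
    rw [Matrix.trace_mul_comm, ← mul_assoc]
  have h3 : (C * B * C).trace = (B * C * C).trace := by
    rw [mul_assoc, Matrix.trace_mul_comm]
  have hB : B.trace = b * n := by rw [hb, beta1]; field_simp
  have hC : C.trace = c * n := by rw [hc, beta1]; field_simp
  clear hb hc
  simp only [beta1, beta2, pow_two, mul_sub, sub_mul, smul_mul_assoc, mul_smul_comm, one_mul,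
    mul_one, Matrix.trace_sub, Matrix.trace_smul, smul_eq_mul, Matrix.trace_one, Fintype.card_fin,
    ← mul_assoc, h1, h2, h3, hB, hC, smul_sub]
  field_simp
  ring

/-- under the asymptotic freeness condition for the alternating
product of centered matrices, together with the second-order conditions and
boundedness, `β₁(BCBC) − (β₂(B)c² + b²β₂(C) − b²c²) → 0`. -/
theorem beta1_alternating_tendsto
    (d : ℕ → ℕ) (hd : ∀ m, 1 ≤ d m)
    (B C : ∀ m, Matrix (Fin (d m)) (Fin (d m)) ℝ)
    (b c : ℕ → ℝ)
    (hb : ∀ m, b m = beta1 (B m)) (hc : ∀ m, c m = beta1 (C m))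
    (hfree : Tendsto (fun m =>
        beta1 ((B m - b m • (1 : Matrix (Fin (d m)) (Fin (d m)) ℝ)) *
               (C m - c m • (1 : Matrix (Fin (d m)) (Fin (d m)) ℝ)) *
               (B m - b m • (1 : Matrix (Fin (d m)) (Fin (d m)) ℝ)) *
               (C m - c m • (1 : Matrix (Fin (d m)) (Fin (d m)) ℝ))))
      atTop (nhds 0))
    (hB2C : Tendsto (fun m => beta1 (B m ^ 2 * C m) - beta2 (B m) * c m)
      atTop (nhds 0))
    (hBC2 : Tendsto (fun m => beta1 (B m * C m ^ 2) - b m * beta2 (C m))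
      atTop (nhds 0))
    (hBC : Tendsto (fun m => beta1 (B m * C m) - b m * c m) atTop (nhds 0))
    (hbddb : ∃ M : ℝ, ∀ m, |b m| ≤ M)
    (hbddc : ∃ M : ℝ, ∀ m, |c m| ≤ M)
    (hbddB2 : ∃ M : ℝ, ∀ m, |beta2 (B m)| ≤ M)
    (hbddC2 : ∃ M : ℝ, ∀ m, |beta2 (C m)| ≤ M) :
    Tendsto (fun m => beta1 (B m * C m * B m * C m)
        - (beta2 (B m) * c m ^ 2 + b m ^ 2 * beta2 (C m) - b m ^ 2 * c m ^ 2))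
      atTop (nhds 0) := by
  obtain ⟨Mb, hMb⟩ := hbddb
  obtain ⟨Mc, hMc⟩ := hbddc
  have key : ∀ (u v : ℕ → ℝ) (M : ℝ), (∀ m, |u m| ≤ M) → Tendsto v atTop (nhds 0) →
      Tendsto (fun m => u m * v m) atTop (nhds 0) := by
    intro u v M hu hv
    have h2 : Tendsto (fun m => M * |v m|) atTop (nhds 0) := by
      simpa using hv.abs.const_mul M
    refine squeeze_zero_norm (fun m => ?_) h2
    rw [Real.norm_eq_abs, abs_mul]
    exact mul_le_mul_of_nonneg_right (hu m) (abs_nonneg _)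
  have t1 := (key c _ Mc hMc hB2C).const_mul 2
  have t2 := (key b _ Mb hMb hBC2).const_mul 2
  have t3 := (key b _ Mb hMb (key c _ Mc hMc hBC)).const_mul 4
  have t := ((hfree.add t1).add t2).sub t3
  simp only [mul_zero, add_zero, sub_zero] at t
  refine t.congr (fun m => ?_)
  rw [beta1_expand_aux (hd m) (B m) (C m) (b m) (c m) (hb m) (hc m)]
  ring
end
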